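/- Assume α₋ is invertible, R(0) = δ − γ₋α₋⁻¹β₋ is invertible, R(z) is invertible for every z in an open annulus containing the unit circle 𝕋, and R admits a right canonical Wiener–Hopf factorization. Let Q ∈ B(X₊, X₋) be the stabilizing solution of the Riccati equation (R1), with α₊° := α₊ − β₊(δ − γ₋Qβ₊)⁻¹(γ₊ − γ₋Qα₊) and α₋° := α₋ − (β₋ − α₋Qβ₊)(δ − γ₋Qβ₊)⁻¹γ₋ (the operator α₋° is invertible since R(0) is invertible), and let Z ∈ B(X₋, X₊) be a solution of the Lyapunov equation Z(α₋°)⁻¹ − α₊°Z = −β₊R(0)⁻¹γ₋α₋⁻¹. Then R admits a left canonical Wiener–Hopf factorization if and only if I − QZ ∈ B(X₋) is invertible. -/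

import Mathlib

open Metric ContinuousLinearMap

noncomputable section

variable {U Xp Xm : Type*}
  [NormedAddCommGroup U] [InnerProductSpace ℂ U] [CompleteSpace U]
  [NormedAddCommGroup Xp] [InnerProductSpace ℂ Xp] [CompleteSpace Xp]
  [NormedAddCommGroup Xm] [InnerProductSpace ℂ Xm] [CompleteSpace Xm]

/-- The stable representation
`R(z) = δ + z·γ₊(I − zα₊)⁻¹β₊ + γ₋(zI − α₋)⁻¹β₋`. -/
def Rfun (δ : U →L[ℂ] U) (γp : Xp →L[ℂ] U) (αp : Xp →L[ℂ] Xp) (βp : U →L[ℂ] Xp)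
    (γm : Xm →L[ℂ] U) (αm : Xm →L[ℂ] Xm) (βm : U →L[ℂ] Xm) (z : ℂ) : U →L[ℂ] U :=
  δ + z • ((γp ∘L Ring.inverse (1 - z • αp)) ∘L βp) +
    (γm ∘L Ring.inverse (z • (1 : Xm →L[ℂ] Xm) - αm)) ∘L βm

/-- `Q` solves the Riccati equation (R1):
`δ − γ₋Qβ₊` is invertible and
`Q = α₋Qα₊ + (β₋ − α₋Qβ₊)(δ − γ₋Qβ₊)⁻¹(γ₊ − γ₋Qα₊)`. -/
def SolvesR1 (δ : U →L[ℂ] U) (γp : Xp →L[ℂ] U) (αp : Xp →L[ℂ] Xp) (βp : U →L[ℂ] Xp)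
    (γm : Xm →L[ℂ] U) (αm : Xm →L[ℂ] Xm) (βm : U →L[ℂ] Xm) (Q : Xp →L[ℂ] Xm) : Prop :=
  IsUnit (δ - (γm ∘L Q) ∘L βp) ∧
    Q = (αm ∘L Q) ∘L αp +
      ((βm - (αm ∘L Q) ∘L βp) ∘L Ring.inverse (δ - (γm ∘L Q) ∘L βp)) ∘L
        (γp - (γm ∘L Q) ∘L αp)

/-- The operator `α₊° := α₊ − β₊(δ − γ₋Qβ₊)⁻¹(γ₊ − γ₋Qα₊)`. -/
def alphaPcirc (δ : U →L[ℂ] U) (γp : Xp →L[ℂ] U) (αp : Xp →L[ℂ] Xp) (βp : U →L[ℂ] Xp)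
    (γm : Xm →L[ℂ] U) (Q : Xp →L[ℂ] Xm) : Xp →L[ℂ] Xp :=
  αp - (βp ∘L Ring.inverse (δ - (γm ∘L Q) ∘L βp)) ∘L (γp - (γm ∘L Q) ∘L αp)

/-- The operator `α₋° := α₋ − (β₋ − α₋Qβ₊)(δ − γ₋Qβ₊)⁻¹γ₋`. -/
def alphaMcirc (δ : U →L[ℂ] U) (βp : U →L[ℂ] Xp) (γm : Xm →L[ℂ] U) (αm : Xm →L[ℂ] Xm)
    (βm : U →L[ℂ] Xm) (Q : Xp →L[ℂ] Xm) : Xm →L[ℂ] Xm :=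
  αm - ((βm - (αm ∘L Q) ∘L βp) ∘L Ring.inverse (δ - (γm ∘L Q) ∘L βp)) ∘L γm

/-- A solution `Q` of (R1) is stabilizing if `α₊°` and `α₋°` have spectrum contained in
the open unit disc. -/
def StabilizingR1 (δ : U →L[ℂ] U) (γp : Xp →L[ℂ] U) (αp : Xp →L[ℂ] Xp) (βp : U →L[ℂ] Xp)
    (γm : Xm →L[ℂ] U) (αm : Xm →L[ℂ] Xm) (βm : U →L[ℂ] Xm) (Q : Xp →L[ℂ] Xm) : Prop :=
  spectrum ℂ (alphaPcirc δ γp αp βp γm Q) ⊆ ball (0 : ℂ) 1 ∧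
    spectrum ℂ (alphaMcirc δ βp γm αm βm Q) ⊆ ball (0 : ℂ) 1

/-- A `B(U)`-valued function of "plus type": analytic on an open neighborhood of the
closed unit disc, with invertible values and analytic pointwise inverse there. -/
def PlusFactor {E : Type*} [NormedAddCommGroup E] [InnerProductSpace ℂ E] [CompleteSpace E]
    (V : ℂ → (E →L[ℂ] E)) : Prop :=
  ∃ S : Set ℂ, IsOpen S ∧ closedBall (0 : ℂ) 1 ⊆ S ∧
    AnalyticOnNhd ℂ V S ∧ (∀ z ∈ S, IsUnit (V z)) ∧
    AnalyticOnNhd ℂ (fun z => Ring.inverse (V z)) S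

/-- A `B(U)`-valued function of "minus type" on the complement of the open unit disc:
`z ↦ V(1/z)` (with the value at `0` corresponding to `V(∞)`) extends to a function
that is analytic on an open neighborhood of the closed unit disc, with invertible
values and analytic pointwise inverse there. -/
def MinusFactor {E : Type*} [NormedAddCommGroup E] [InnerProductSpace ℂ E] [CompleteSpace E]
    (V : ℂ → (E →L[ℂ] E)) : Prop :=
  ∃ Vhat : ℂ → (E →L[ℂ] E), PlusFactor Vhat ∧ ∀ z : ℂ, 1 ≤ ‖z‖ → V z = Vhat z⁻¹

/-- A right canonical Wiener–Hopf factorization `R(z) = V₋(z)V₊(z)` on the unit circle. -/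
def RightCanonicalWH {E : Type*} [NormedAddCommGroup E] [InnerProductSpace ℂ E]
    [CompleteSpace E] (R : ℂ → (E →L[ℂ] E)) : Prop :=
  ∃ Vm Vp : ℂ → (E →L[ℂ] E), MinusFactor Vm ∧ PlusFactor Vp ∧
    ∀ z : ℂ, ‖z‖ = 1 → R z = Vm z * Vp z

/-- A left canonical Wiener–Hopf factorization `R(z) = W₊(z)W₋(z)` on the unit circle. -/
def LeftCanonicalWH {E : Type*} [NormedAddCommGroup E] [InnerProductSpace ℂ E]
    [CompleteSpace E] (R : ℂ → (E →L[ℂ] E)) : Prop :=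
  ∃ Wp Wm : ℂ → (E →L[ℂ] E), PlusFactor Wp ∧ MinusFactor Wm ∧
    ∀ z : ℂ, ‖z‖ = 1 → R z = Wp z * Wm z

section Analysis
variable {E F : Type*} [NormedAddCommGroup E] [NormedSpace ℂ E]
  [NormedAddCommGroup F] [NormedSpace ℂ F]

theorem diffContOnCl_of_differentiableAt_closedBall {f : ℂ → E}
    (hf : ∀ z : ℂ, ‖z‖ ≤ 1 → DifferentiableAt ℂ f z) : DiffContOnCl ℂ f (ball 0 1) := by
  apply DifferentiableOn.diffContOnCl
  rw [closure_ball _ one_ne_zero]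
  exact fun z hz => (hf z (by simpa using hz)).differentiableWithinAt

theorem circleAverage_eq_of_differentiableAt [CompleteSpace E] {f : ℂ → E}
    (hf : ∀ z : ℂ, ‖z‖ ≤ 1 → DifferentiableAt ℂ f z) : Real.circleAverage f 0 1 = f 0 :=
  DiffContOnCl.circleAverage (by simpa using diffContOnCl_of_differentiableAt_closedBall hf)

theorem circleAverage_inv_eq_of_differentiableAt [CompleteSpace E] {f : ℂ → E}
    (hf : ∀ z : ℂ, ‖z‖ ≤ 1 → DifferentiableAt ℂ f z) :
    Real.circleAverage (fun z => f z⁻¹) 0 1 = f 0 := by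
  rw [← circleAverage_eq_of_differentiableAt hf]
  exact Real.circleAverage_zero_one_congr_inv

theorem circleAverage_congr_of_norm_eq_one {f g : ℂ → E} (h : ∀ z : ℂ, ‖z‖ = 1 → f z = g z) :
    Real.circleAverage f 0 1 = Real.circleAverage g 0 1 :=
  Real.circleAverage_congr_sphere fun z hz => h z (by simpa using hz)

theorem circleIntegrable_of_continuousAt {E : Type*} [NormedAddCommGroup E] {f : ℂ → E}
    (hf : ∀ z : ℂ, ‖z‖ = 1 → ContinuousAt f z) :
    CircleIntegrable f 0 1 :=
  ContinuousOn.circleIntegrable zero_le_one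
    fun z hz => (hf z (by simpa using hz)).continuousWithinAt

theorem circleAverage_clm_apply [CompleteSpace E] [CompleteSpace F] (L : E →L[ℂ] F) {f : ℂ → E}
    (hf : ∀ z : ℂ, ‖z‖ = 1 → ContinuousAt f z) :
    Real.circleAverage (fun z => L (f z)) 0 1 = L (Real.circleAverage f 0 1) :=
  (L.restrictScalars ℝ).circleAverage_comp_comm (circleIntegrable_of_continuousAt hf)

/-- A function holomorphic near the closed disc all of whose Fourier coefficients of nonnegative
index vanish is zero on the unit circle. -/
theorem eq_zero_of_circleAverage_eq_zero [CompleteSpace E] {f : ℂ → E}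
    (hf : ∀ z : ℂ, ‖z‖ ≤ 1 → DifferentiableAt ℂ f z)
    (h : ∀ m : ℕ, Real.circleAverage (fun z => z⁻¹ ^ m • f z) 0 1 = 0) (z : ℂ) (hz : ‖z‖ = 1) :
    f z = 0 := by
  have hp : HasFPowerSeriesOnBall f (cauchyPowerSeries f 0 (1 : NNReal)) 0 (1 : NNReal) :=
    DiffContOnCl.hasFPowerSeriesOnBall
      (by simpa using diffContOnCl_of_differentiableAt_closedBall hf) one_pos
  have hp0 : ∀ n, cauchyPowerSeries f 0 (1 : NNReal) n = 0 := by
    intro n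
    have := h n
    rw [Real.circleAverage_eq_circleIntegral one_ne_zero] at this
    have h2 : (2 * Real.pi * Complex.I : ℂ)⁻¹ •
        (∮ z in C(0, (1 : NNReal)), (z - 0)⁻¹ ^ n • (z - 0)⁻¹ • f z) = 0 := by
      rw [← this]
      simp only [NNReal.coe_one, sub_zero]
      congr! 3 with w
      exact smul_comm _ _ _
    rw [cauchyPowerSeries, h2]
    ext; simp
  have hball : Set.EqOn f 0 (ball 0 1) := by
    intro w hw
    have hs := hp.hasSum (y := w) (by
      simpa only [mem_eball_zero_iff, enorm_lt_coe, mem_ball_zero_iff, ← coe_nnnorm, ← NNReal.coe_one,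
        NNReal.coe_lt_coe] using hw)
    simp only [hp0, zero_add] at hs
    simpa using hs.unique hasSum_zero
  have hcl : Set.EqOn f 0 (closedBall 0 1) := by
    refine hball.of_subset_closure ?_ continuousOn_const ball_subset_closedBall ?_
    · exact fun z hz => (hf z (by simpa using hz)).continuousAt.continuousWithinAt
    · rw [closure_ball _ one_ne_zero]
  exact hcl (by simp [hz])
end Analysis

theorem inverse_eq_of_mul_eq_one {R : Type*} [Ring R] {x y : R} (h₁ : x * y = 1) (h₂ : y * x = 1) :
    Ring.inverse x = y :=
  Ring.inverse_unit ⟨x, y, h₁, h₂⟩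

section Resolvent
variable {X : Type*} [NormedAddCommGroup X] [NormedSpace ℂ X]

/-- The inverse of `1 - z • a`. -/
def res (a : X →L[ℂ] X) (z : ℂ) : X →L[ℂ] X := Ring.inverse (1 - z • a)

theorem isUnit_one_sub_smul {a : X →L[ℂ] X} (ha : spectrum ℂ a ⊆ ball (0 : ℂ) 1) {z : ℂ}
    (hz : ‖z‖ ≤ 1) : IsUnit (1 - z • a) := by
  rcases eq_or_ne z 0 with rfl | h0
  · simp
  have h : z⁻¹ ∉ spectrum ℂ a := fun h => by
    have := ha h
    rw [mem_ball_zero_iff, norm_inv] at this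
    exact absurd this (not_lt.2 ((one_le_inv₀ (norm_pos_iff.2 h0)).2 hz))
  rw [spectrum.notMem_iff] at h
  have h1 : 1 - z • a = (Units.mk0 z h0) • (algebraMap ℂ (X →L[ℂ] X) z⁻¹ - a) := by
    rw [Units.smul_mk0, smul_sub, Algebra.algebraMap_eq_smul_one, smul_inv_smul₀ h0]
  rw [h1]
  exact h.smul _

theorem res_sub_apply {a : X →L[ℂ] X} {z : ℂ} (h : IsUnit (1 - z • a)) (x : X) :
    res a z (x - z • a x) = x := by
  simpa [res] using DFunLike.congr_fun (Ring.inverse_mul_cancel _ h) x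

theorem res_apply_sub {a : X →L[ℂ] X} {z : ℂ} (h : IsUnit (1 - z • a)) (x : X) :
    res a z x - z • a (res a z x) = x := by
  simpa [res] using DFunLike.congr_fun (Ring.mul_inverse_cancel _ h) x

theorem differentiableAt_res [CompleteSpace X] {a : X →L[ℂ] X} {z : ℂ} (h : IsUnit (1 - z • a)) :
    DifferentiableAt ℂ (res a) z := by
  obtain ⟨u, hu⟩ := h
  have h1 : DifferentiableAt ℂ (Ring.inverse : (X →L[ℂ] X) → _) (1 - z • a) :=
    hu ▸ (analyticAt_inverse u).differentiableAt
  exact h1.comp z (by fun_prop)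

theorem isOpen_setOf_isUnit_one_sub_smul [CompleteSpace X] (a : X →L[ℂ] X) :
    IsOpen {z : ℂ | IsUnit (1 - z • a)} :=
  Units.isOpen.preimage (by fun_prop)

theorem inverse_smul_one_sub {a : X →L[ℂ] X} {z : ℂ} (hz : z ≠ 0) (h : IsUnit (1 - z⁻¹ • a)) :
    Ring.inverse (z • (1 : X →L[ℂ] X) - a) = z⁻¹ • res a z⁻¹ := by
  have h1 : z • (1 : X →L[ℂ] X) - a = z • (1 - z⁻¹ • a) := by
    rw [smul_sub, smul_inv_smul₀ hz]
  rw [h1]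
  refine inverse_eq_of_mul_eq_one ?_ ?_
  · rw [smul_mul_smul_comm, mul_inv_cancel₀ hz, one_smul, res, Ring.mul_inverse_cancel _ h]
  · rw [smul_mul_smul_comm, inv_mul_cancel₀ hz, one_smul, res, Ring.inverse_mul_cancel _ h]

theorem res_zero (a : X →L[ℂ] X) : res a 0 = 1 := by simp [res]

theorem norm_inv_le_one {z : ℂ} (hz : ‖z‖ = 1) : ‖z⁻¹‖ ≤ 1 := by simp [hz]

theorem ne_zero_of_norm_eq_one {z : ℂ} (hz : ‖z‖ = 1) : z ≠ 0 := by
  rintro rfl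
  simp at hz

theorem continuousAt_comp_inv {E : Type*} [NormedAddCommGroup E] [NormedSpace ℂ E] {f : ℂ → E}
    (hf : ∀ z : ℂ, ‖z‖ ≤ 1 → DifferentiableAt ℂ f z) {z : ℂ} (hz : ‖z‖ = 1) :
    ContinuousAt (fun z => f z⁻¹) z :=
  ContinuousAt.comp (f := fun z : ℂ => z⁻¹) (hf _ (norm_inv_le_one hz)).continuousAt
    (continuousAt_inv₀ (ne_zero_of_norm_eq_one hz))

/-- If `f` is holomorphic near the closed disc, then multiplying `(1 - z • a)⁻¹ f(z⁻¹)` by powers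
of `z⁻¹` preserves the vanishing of the average. -/
theorem circleAverage_inv_pow_smul_res_eq_zero [CompleteSpace X] {a : X →L[ℂ] X}
    (ha : spectrum ℂ a ⊆ ball (0 : ℂ) 1) {f : ℂ → X}
    (hf : ∀ z : ℂ, ‖z‖ ≤ 1 → DifferentiableAt ℂ f z)
    (h : Real.circleAverage (fun z => res a z (f z⁻¹)) 0 1 = 0) (m : ℕ) :
    Real.circleAverage (fun z => z⁻¹ ^ m • res a z (f z⁻¹)) 0 1 = 0 := by
  have hcont (m : ℕ) (z : ℂ) (hz : ‖z‖ = 1) :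
      ContinuousAt (fun z => z⁻¹ ^ m • res a z (f z⁻¹)) z := by
    have h0 := ne_zero_of_norm_eq_one hz
    have h1 := (differentiableAt_res (isUnit_one_sub_smul ha hz.le)).continuousAt
    exact ((continuousAt_inv₀ h0).pow m).smul (h1.clm_apply (continuousAt_comp_inv hf hz))
  induction m with
  | zero => simpa using h
  | succ m ih =>
    have hf' : ∀ z : ℂ, ‖z‖ ≤ 1 → DifferentiableAt ℂ (fun w => w ^ (m + 1) • f w) z :=
      fun z hz => (by fun_prop : DifferentiableAt ℂ (fun w : ℂ => w ^ (m + 1)) z).smul (hf z hz)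
    have h1 : ∀ z : ℂ, ‖z‖ = 1 → z⁻¹ ^ (m + 1) • res a z (f z⁻¹) =
        z⁻¹ ^ (m + 1) • f z⁻¹ + a (z⁻¹ ^ m • res a z (f z⁻¹)) := by
      intro z hz
      have h0 := ne_zero_of_norm_eq_one hz
      have h2 := res_apply_sub (isUnit_one_sub_smul ha hz.le) (f z⁻¹)
      nth_rw 2 [← h2]
      rw [smul_sub, smul_smul, pow_succ, mul_assoc, inv_mul_cancel₀ h0, mul_one, map_smul]
      abel
    rw [circleAverage_congr_of_norm_eq_one h1, Real.circleAverage_fun_add,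
      circleAverage_clm_apply a (hcont m), ih, circleAverage_inv_eq_of_differentiableAt hf']
    · simp
    · exact circleIntegrable_of_continuousAt fun z hz => continuousAt_comp_inv hf' hz
    · exact circleIntegrable_of_continuousAt fun z hz => a.continuous.continuousAt.comp (hcont m z hz)

/-- The integral formula for the solution of a Stein equation. -/
theorem circleAverage_stein {Y : Type*} [NormedAddCommGroup Y] [NormedSpace ℂ Y]
    [CompleteSpace X] [CompleteSpace Y] {a : X →L[ℂ] X} {b : Y →L[ℂ] Y} {K Z : Y →L[ℂ] X}
    (ha : spectrum ℂ a ⊆ ball (0 : ℂ) 1) (hb : spectrum ℂ b ⊆ ball (0 : ℂ) 1)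
    (h : ∀ y, K y = a (Z (b y)) - Z y) (y : Y) :
    Real.circleAverage (fun z => res a z (K (res b z⁻¹ y))) 0 1 = -Z y := by
  have hf : ∀ z : ℂ, ‖z‖ ≤ 1 → DifferentiableAt ℂ (fun w => -Z (res b w y)) z := by
    intro z hz
    have := differentiableAt_res (isUnit_one_sub_smul hb hz)
    fun_prop
  have hg : ∀ z : ℂ, ‖z‖ ≤ 1 → DifferentiableAt ℂ (fun z => z • res a z (a (Z y))) z := by
    intro z hz
    have := differentiableAt_res (isUnit_one_sub_smul ha hz)
    fun_prop
  have key : ∀ z : ℂ, ‖z‖ = 1 → res a z (K (res b z⁻¹ y)) =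
      -Z (res b z⁻¹ y) - z • res a z (a (Z y)) := by
    intro z hz
    have h0 := ne_zero_of_norm_eq_one hz
    set q := res b z⁻¹ y
    have hq : b q = z • (q - y) := by
      have : q - z⁻¹ • b q = y := res_apply_sub (isUnit_one_sub_smul hb (norm_inv_le_one hz)) y
      rw [← this, sub_sub_cancel, smul_inv_smul₀ h0]
    have h1 := res_sub_apply (isUnit_one_sub_smul ha hz.le) (-Z q)
    rw [← h1, h, hq, ← map_smul (res a z), ← map_sub]
    congr 1
    simp only [map_neg, map_smul, map_sub]
    module
  rw [circleAverage_congr_of_norm_eq_one key, Real.circleAverage_fun_sub,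
    circleAverage_inv_eq_of_differentiableAt hf, circleAverage_eq_of_differentiableAt hg]
  · simp [res_zero]
  · exact circleIntegrable_of_continuousAt fun z hz => continuousAt_comp_inv hf hz
  · exact circleIntegrable_of_continuousAt fun z hz => (hg z hz.le).continuousAt
end Resolvent

section Algebra
variable {U Xp Xm : Type*}
  [NormedAddCommGroup U] [NormedSpace ℂ U]
  [NormedAddCommGroup Xp] [NormedSpace ℂ Xp]
  [NormedAddCommGroup Xm] [NormedSpace ℂ Xm]

/-- The relations by which `Z` and `Q` intertwine the realization of `R` with `A` and `D`. -/
structure Intertwining (δ : U →L[ℂ] U) (γp : Xp →L[ℂ] U) (αp : Xp →L[ℂ] Xp) (βp : U →L[ℂ] Xp)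
    (γm : Xm →L[ℂ] U) (αm : Xm →L[ℂ] Xm) (βm : U →L[ℂ] Xm) (A : Xp →L[ℂ] Xp) (D : Xm →L[ℂ] Xm)
    (Q : Xp →L[ℂ] Xm) (Z : Xm →L[ℂ] Xp) (N : U →L[ℂ] Xp) (M : Xm →L[ℂ] U) : Prop where
  N_γm : ∀ x, N (γm x) = A (Z (αm x)) - Z x
  N_δ : ∀ u, N (δ u) = βp u - Z (Q (βp u)) + A (Z (βm u))
  N_γp : ∀ x, N (γp x) = αp x - Z (Q (αp x)) - (A x - A (Z (Q x)))
  βp_M : ∀ x, βp (M x) = αp (Z (D x)) - Z x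
  δ_M : ∀ x, δ (M x) = γp (Z (D x)) + γm x - γm (Q (Z x))
  βm_M : ∀ x, βm (M x) = αm x - αm (Q (Z x)) - (D x - Q (Z (D x)))

variable {δ : U →L[ℂ] U} {γp : Xp →L[ℂ] U} {αp : Xp →L[ℂ] Xp} {βp : U →L[ℂ] Xp}
  {γm : Xm →L[ℂ] U} {αm : Xm →L[ℂ] Xm} {βm : U →L[ℂ] Xm} {A : Xp →L[ℂ] Xp} {D : Xm →L[ℂ] Xm}
  {Q : Xp →L[ℂ] Xm} {Z : Xm →L[ℂ] Xp}

theorem intertwining_of_riccati_of_stein {d : U →L[ℂ] U}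
    (hd₁ : ∀ u, d (δ u) = u + d (γm (Q (βp u))))
    (hd₂ : ∀ u, δ (d u) = u + γm (Q (βp (d u))))
    (hA : ∀ x, A x = αp x - βp (d (γp x - γm (Q (αp x)))))
    (hD : ∀ x, D x = αm x - (βm (d (γm x)) - αm (Q (βp (d (γm x))))))
    (hQ : ∀ x, Q x = αm (Q (αp x)) + (βm (d (γp x - γm (Q (αp x)))) -
      αm (Q (βp (d (γp x - γm (Q (αp x))))))))
    (hZ : ∀ x, Z x = A (Z (D x)) - βp (d (γm x))) :
    Intertwining δ γp αp βp γm αm βm A D Q Z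
      ((βp + A ∘L Z ∘L (βm - αm ∘L Q ∘L βp)) ∘L d)
      (d ∘L (γm + (γp - γm ∘L Q ∘L αp) ∘L Z ∘L D)) := by
  set N := (βp + A ∘L Z ∘L (βm - αm ∘L Q ∘L βp)) ∘L d with hN
  set M := d ∘L (γm + (γp - γm ∘L Q ∘L αp) ∘L Z ∘L D) with hM
  have N_app (u) : N u = βp (d u) + A (Z (βm (d u) - αm (Q (βp (d u))))) := by simp [hN]
  have M_app (x) : M x = d (γm x) + d (γp (Z (D x)) - γm (Q (αp (Z (D x))))) := by simp [hM]
  have N_γm (x) : N (γm x) = A (Z (αm x)) - Z x := by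
    have h : βm (d (γm x)) - αm (Q (βp (d (γm x)))) = αm x - D x := by rw [hD]; abel
    rw [N_app, h, hZ x, map_sub, map_sub]; abel
  have βp_M (x) : βp (M x) = αp (Z (D x)) - Z x := by
    rw [M_app, map_add, hZ x, hA (Z (D x))]; abel
  refine ⟨N_γm, fun u => ?_, fun x => ?_, βp_M, fun x => ?_, fun x => ?_⟩
  · have h := N_γm (Q (βp u))
    rw [N_app] at h ⊢
    simp only [hd₁, map_add, map_sub] at h ⊢
    linear_combination (norm := module) h
  · have h := N_γm (Q (αp x))
    have h2 : N (γp x) = N (γp x - γm (Q (αp x))) + N (γm (Q (αp x))) := by simp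
    have h3 : βm (d (γp x - γm (Q (αp x)))) - αm (Q (βp (d (γp x - γm (Q (αp x)))))) =
        Q x - αm (Q (αp x)) :=
      eq_sub_of_add_eq' (hQ x).symm
    rw [h2, h, N_app, h3, hA x]
    simp only [map_sub]
    abel
  · have h : δ (M x) =
        γm x + (γp (Z (D x)) - γm (Q (αp (Z (D x))))) + γm (Q (βp (M x))) := by
      rw [M_app, ← map_add, hd₂]
    rw [h, βp_M]
    simp only [map_sub]
    abel
  · have h := hQ (Z (D x))
    have h2 := congrArg (fun y => αm (Q y)) (βp_M x)
    have h3 := hD x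
    simp only [M_app, map_add, map_sub] at h h2 ⊢
    linear_combination (norm := module) h2 - h + h3
end Algebra

section Factorization
variable {U Xp Xm : Type*}
  [NormedAddCommGroup U] [NormedSpace ℂ U]
  [NormedAddCommGroup Xp] [NormedSpace ℂ Xp]
  [NormedAddCommGroup Xm] [NormedSpace ℂ Xm]
  {δ : U →L[ℂ] U} {γp : Xp →L[ℂ] U} {αp : Xp →L[ℂ] Xp} {βp : U →L[ℂ] Xp}
  {γm : Xm →L[ℂ] U} {αm : Xm →L[ℂ] Xm} {βm : U →L[ℂ] Xm} {A : Xp →L[ℂ] Xp} {D : Xm →L[ℂ] Xm}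
  {Q : Xp →L[ℂ] Xm} {Z : Xm →L[ℂ] Xp} {N : U →L[ℂ] Xp} {M : Xm →L[ℂ] U}

theorem res_N_apply (h : Intertwining δ γp αp βp γm αm βm A D Q Z N M)
    (hαp : spectrum ℂ αp ⊆ ball (0 : ℂ) 1) (hαm : spectrum ℂ αm ⊆ ball (0 : ℂ) 1)
    (hA : spectrum ℂ A ⊆ ball (0 : ℂ) 1) {z : ℂ} (hz : ‖z‖ = 1) (u : U) :
    res A z (N (δ u + z • γp (res αp z (βp u)) + z⁻¹ • γm (res αm z⁻¹ (βm u)))) =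
      res αp z (βp u) - Z (Q (res αp z (βp u))) - z⁻¹ • Z (res αm z⁻¹ (βm u)) := by
  have h0 := ne_zero_of_norm_eq_one hz
  have hp := res_apply_sub (isUnit_one_sub_smul hαp hz.le) (βp u)
  have hq := res_apply_sub (isUnit_one_sub_smul hαm (norm_inv_le_one hz)) (βm u)
  set p := res αp z (βp u)
  set q := res αm z⁻¹ (βm u)
  rw [← res_sub_apply (isUnit_one_sub_smul hA hz.le) (p - Z (Q p) - z⁻¹ • Z q)]
  congr 1
  simp only [map_add, map_smul, map_sub, h.N_δ, h.N_γp, h.N_γm, smul_sub, smul_inv_smul₀ h0]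
  rw [← hp, ← hq]
  simp only [map_sub, map_smul]
  module

theorem M_res_apply (h : Intertwining δ γp αp βp γm αm βm A D Q Z N M)
    (hαp : spectrum ℂ αp ⊆ ball (0 : ℂ) 1) (hαm : spectrum ℂ αm ⊆ ball (0 : ℂ) 1)
    (hD : spectrum ℂ D ⊆ ball (0 : ℂ) 1) {z : ℂ} (hz : ‖z‖ = 1) (x : Xm) {v : U}
    (hv : v = M (z⁻¹ • res D z⁻¹ x)) :
    δ v + z • γp (res αp z (βp v)) + z⁻¹ • γm (res αm z⁻¹ (βm v)) =
      z⁻¹ • γm (res αm z⁻¹ (x - Q (Z x))) - γp (res αp z (Z x)) := by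
  have h0 := ne_zero_of_norm_eq_one hz
  have hy := res_apply_sub (isUnit_one_sub_smul hD (norm_inv_le_one hz)) x
  set y := res D z⁻¹ x
  have hx : y = x + z⁻¹ • D y := by rw [← hy]; abel
  have e1 : z • res αp z (βp v) = -(z⁻¹ • Z (D y)) - res αp z (Z x) := by
    have h1 := res_sub_apply (isUnit_one_sub_smul hαp hz.le) (-(z⁻¹ • Z (D y)))
    rw [hv, map_smul, map_smul, map_smul, smul_inv_smul₀ h0, h.βp_M, ← h1, ← map_sub]
    congr 1
    nth_rw 2 [hx]
    simp only [map_add, map_neg, map_smul, smul_neg, smul_inv_smul₀ h0]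
    abel
  have e2 : res αm z⁻¹ (βm v) = res αm z⁻¹ (x - Q (Z x)) - (y - Q (Z y)) := by
    have h1 := res_sub_apply (isUnit_one_sub_smul hαm (norm_inv_le_one hz)) (y - Q (Z y))
    rw [← h1, ← map_sub, hv, map_smul, map_smul, h.βm_M]
    congr 1
    rw [← hy]
    simp only [map_sub, map_smul]
    module
  rw [← map_smul, e1, e2, hv, map_smul, map_smul, h.δ_M]
  simp only [map_sub, map_neg, map_smul]
  module

variable {Wp Wpi Wm Wmi : ℂ → U →L[ℂ] U}

theorem eq_zero_of_eq_QZ_of_factorization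
    [CompleteSpace U] [CompleteSpace Xp] [CompleteSpace Xm]
    (h : Intertwining δ γp αp βp γm αm βm A D Q Z N M)
    (hαp : spectrum ℂ αp ⊆ ball (0 : ℂ) 1) (hαm : spectrum ℂ αm ⊆ ball (0 : ℂ) 1)
    (hD : spectrum ℂ D ⊆ ball (0 : ℂ) 1)
    (hWpi : ∀ z : ℂ, ‖z‖ ≤ 1 → DifferentiableAt ℂ Wpi z)
    (hWm : ∀ z : ℂ, ‖z‖ ≤ 1 → DifferentiableAt ℂ Wm z)
    (hp : ∀ z : ℂ, ‖z‖ ≤ 1 → ∀ u, Wpi z (Wp z u) = u)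
    (hm : ∀ z : ℂ, ‖z‖ ≤ 1 → ∀ u, Wmi z (Wm z u) = u)
    (hR : ∀ z : ℂ, ‖z‖ = 1 → ∀ u, Wp z (Wm z⁻¹ u) =
      δ u + z • γp (res αp z (βp u)) + z⁻¹ • γm (res αm z⁻¹ (βm u)))
    {x : Xm} (hx : x - Q (Z x) = 0) : x = 0 := by
  have hg : ∀ z : ℂ, ‖z‖ ≤ 1 →
      DifferentiableAt ℂ (fun z => Wpi z (γp (res αp z (Z x)))) z := by
    intro z hz
    have h1 := differentiableAt_res (isUnit_one_sub_smul hαp hz)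
    have h2 := hWpi z hz
    fun_prop
  have key : ∀ z : ℂ, ‖z‖ = 1 →
      Wpi z (γp (res αp z (Z x))) = -Wm z⁻¹ (M (z⁻¹ • res D z⁻¹ x)) := by
    intro z hz
    have h1 := M_res_apply h hαp hαm hD hz x rfl
    rw [← hR z hz, hx, map_zero, map_zero, smul_zero, zero_sub] at h1
    rw [← hp z hz.le (Wm z⁻¹ _), h1, map_neg, neg_neg]
  have hcoef : ∀ m : ℕ,
      Real.circleAverage (fun z => z⁻¹ ^ m • Wpi z (γp (res αp z (Z x)))) 0 1 = 0 := by
    intro m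
    have hf : ∀ z : ℂ, ‖z‖ ≤ 1 →
        DifferentiableAt ℂ (fun w => w ^ m • -Wm w (M (w • res D w x))) z := by
      intro z hz
      have h1 := differentiableAt_res (isUnit_one_sub_smul hD hz)
      have h2 := hWm z hz
      fun_prop
    rw [circleAverage_congr_of_norm_eq_one
      (g := fun z => z⁻¹ ^ m • -Wm z⁻¹ (M (z⁻¹ • res D z⁻¹ x))) fun z hz => by rw [key z hz],
      circleAverage_inv_eq_of_differentiableAt hf]
    simp
  have hM : ∀ z : ℂ, ‖z‖ = 1 → M (res D z⁻¹ x) = 0 := by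
    intro z hz
    have h1 := key z hz
    rw [eq_zero_of_circleAverage_eq_zero hg hcoef z hz, eq_comm, neg_eq_zero] at h1
    have h2 := hm z⁻¹ (norm_inv_le_one hz) (M (z⁻¹ • res D z⁻¹ x))
    rw [h1, map_zero, map_smul, eq_comm, smul_eq_zero] at h2
    exact h2.resolve_left (inv_ne_zero (ne_zero_of_norm_eq_one hz))
  have hZ := circleAverage_stein (K := βp ∘L M) hαp hD h.βp_M x
  rw [circleAverage_congr_of_norm_eq_one (g := fun _ => 0)
    fun z hz => by simp [hM z hz], Real.circleAverage_const, eq_comm, neg_eq_zero] at hZ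
  simpa [hZ] using hx

theorem exists_sub_ZQ_eq_of_factorization
    [CompleteSpace U] [CompleteSpace Xp] [CompleteSpace Xm]
    (h : Intertwining δ γp αp βp γm αm βm A D Q Z N M)
    (hαp : spectrum ℂ αp ⊆ ball (0 : ℂ) 1) (hαm : spectrum ℂ αm ⊆ ball (0 : ℂ) 1)
    (hA : spectrum ℂ A ⊆ ball (0 : ℂ) 1)
    (hWp : ∀ z : ℂ, ‖z‖ ≤ 1 → DifferentiableAt ℂ Wp z)
    (hWpi : ∀ z : ℂ, ‖z‖ ≤ 1 → DifferentiableAt ℂ Wpi z)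
    (hWmi : ∀ z : ℂ, ‖z‖ ≤ 1 → DifferentiableAt ℂ Wmi z)
    (hp : ∀ z : ℂ, ‖z‖ ≤ 1 → ∀ u, Wp z (Wpi z u) = u)
    (hm : ∀ z : ℂ, ‖z‖ ≤ 1 → ∀ u, Wm z (Wmi z u) = u)
    (hR : ∀ z : ℂ, ‖z‖ = 1 → ∀ u, Wp z (Wm z⁻¹ u) =
      δ u + z • γp (res αp z (βp u)) + z⁻¹ • γm (res αm z⁻¹ (βm u)))
    (x : Xm) : ∃ s : Xp, s - Z (Q s) = Z x := by
  set B := Real.circleAverage (fun z => res αp z ∘L βp ∘L Wmi z⁻¹) 0 1 with hB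
  have hres := fun (z : ℂ) (hz : ‖z‖ ≤ 1) => differentiableAt_res (isUnit_one_sub_smul hαp hz)
  set P : Xp →L[ℂ] Xp := 1 - Z ∘L Q with hP
  have hPapp (s) : P s = s - Z (Q s) := by simp [hP]
  have key (u : U) (z : ℂ) (hz : ‖z‖ = 1) : res A z (N (Wp z u)) = P (res αp z (B u)) := by
    have hg : ∀ z : ℂ, ‖z‖ ≤ 1 →
        DifferentiableAt ℂ (fun z => res A z (N (Wp z u)) - P (res αp z (B u))) z := by
      intro z hz
      have h1 := differentiableAt_res (isUnit_one_sub_smul hA hz)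
      have h2 := hWp z hz
      have h3 := hres z hz
      fun_prop
    have hf : ∀ z : ℂ, ‖z‖ ≤ 1 → DifferentiableAt ℂ (fun w => βp (Wmi w u) - B u) z := by
      intro z hz
      have h1 := hWmi z hz
      fun_prop
    have hf0 : Real.circleAverage (fun z => res αp z (βp (Wmi z⁻¹ u) - B u)) 0 1 = 0 := by
      have hcB : ∀ z : ℂ, ‖z‖ ≤ 1 → DifferentiableAt ℂ (fun z => res αp z (B u)) z := by
        intro z hz
        have h1 := hres z hz
        fun_prop
      have hc : ∀ z : ℂ, ‖z‖ = 1 → ContinuousAt (fun z => res αp z ∘L βp ∘L Wmi z⁻¹) z :=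
        fun z hz => (hres z hz.le).continuousAt.clm_comp
          (continuousAt_const.clm_comp (continuousAt_comp_inv hWmi hz))
      have h1 := circleAverage_clm_apply (ContinuousLinearMap.apply ℂ Xp u) hc
      simp only [ContinuousLinearMap.apply_apply, ContinuousLinearMap.comp_apply, ← hB] at h1
      simp only [map_sub]
      rw [Real.circleAverage_fun_sub, h1, circleAverage_eq_of_differentiableAt hcB]
      · simp [res_zero]
      · exact circleIntegrable_of_continuousAt fun z hz => (hc z hz).clm_apply continuousAt_const
      · exact circleIntegrable_of_continuousAt fun z hz => (hcB z hz.le).continuousAt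
    have hcoef : ∀ m : ℕ, Real.circleAverage
        (fun z => z⁻¹ ^ m • (res A z (N (Wp z u)) - P (res αp z (B u)))) 0 1 = 0 := by
      intro m
      have hk : ∀ z : ℂ, ‖z‖ ≤ 1 →
          DifferentiableAt ℂ (fun w => w ^ m • w • Z (res αm w (βm (Wmi w u)))) z := by
        intro z hz
        have h1 := differentiableAt_res (isUnit_one_sub_smul hαm hz)
        have h2 := hWmi z hz
        fun_prop
      have hc : ∀ z : ℂ, ‖z‖ = 1 →
          ContinuousAt (fun z => z⁻¹ ^ m • res αp z (βp (Wmi z⁻¹ u) - B u)) z :=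
        fun z hz => ((continuousAt_inv₀ (ne_zero_of_norm_eq_one hz)).pow m).smul
          ((hres z hz.le).continuousAt.clm_apply (continuousAt_comp_inv hf hz))
      have h1 : ∀ z : ℂ, ‖z‖ = 1 → z⁻¹ ^ m • (res A z (N (Wp z u)) - P (res αp z (B u))) =
          P (z⁻¹ ^ m • res αp z (βp (Wmi z⁻¹ u) - B u)) -
            z⁻¹ ^ m • z⁻¹ • Z (res αm z⁻¹ (βm (Wmi z⁻¹ u))) := by
        intro z hz
        have h2 := res_N_apply h hαp hαm hA hz (Wmi z⁻¹ u)
        rw [← hR z hz, hm _ (norm_inv_le_one hz), ← hPapp] at h2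
        rw [h2]
        simp only [map_smul, map_sub]
        module
      rw [circleAverage_congr_of_norm_eq_one h1, Real.circleAverage_fun_sub,
        circleAverage_clm_apply P hc, circleAverage_inv_pow_smul_res_eq_zero hαp hf hf0,
        circleAverage_inv_eq_of_differentiableAt hk]
      · simp
      · exact circleIntegrable_of_continuousAt fun z hz => P.continuous.continuousAt.comp (hc z hz)
      · exact circleIntegrable_of_continuousAt fun z hz => continuousAt_comp_inv hk hz
    exact sub_eq_zero.1 (eq_zero_of_circleAverage_eq_zero hg hcoef z hz)
  have hS := circleAverage_stein (K := N ∘L γm) hA hαm h.N_γm x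
  have hrx : ∀ z : ℂ, ‖z‖ ≤ 1 → DifferentiableAt ℂ (fun w => γm (res αm w x)) z := by
    intro z hz
    have h1 := differentiableAt_res (isUnit_one_sub_smul hαm hz)
    fun_prop
  rw [circleAverage_congr_of_norm_eq_one
    (g := fun z => P (res αp z (B (Wpi z (γm (res αm z⁻¹ x))))))
    fun z hz => by rw [← key _ z hz, hp z hz.le]; rfl, circleAverage_clm_apply P] at hS
  · refine ⟨-Real.circleAverage (fun z => res αp z (B (Wpi z (γm (res αm z⁻¹ x))))) 0 1, ?_⟩
    rw [← hPapp, map_neg, hS, neg_neg]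
  · intro z hz
    exact (hres z hz.le).continuousAt.clm_apply (B.continuous.continuousAt.comp
      ((hWpi z hz.le).continuousAt.clm_apply (continuousAt_comp_inv hrx hz)))

theorem isUnit_of_factorization
    [CompleteSpace U] [CompleteSpace Xp] [CompleteSpace Xm]
    (h : Intertwining δ γp αp βp γm αm βm A D Q Z N M)
    (hαp : spectrum ℂ αp ⊆ ball (0 : ℂ) 1) (hαm : spectrum ℂ αm ⊆ ball (0 : ℂ) 1)
    (hA : spectrum ℂ A ⊆ ball (0 : ℂ) 1) (hD : spectrum ℂ D ⊆ ball (0 : ℂ) 1)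
    (hWp : ∀ z : ℂ, ‖z‖ ≤ 1 → DifferentiableAt ℂ Wp z)
    (hWpi : ∀ z : ℂ, ‖z‖ ≤ 1 → DifferentiableAt ℂ (fun z => Ring.inverse (Wp z)) z)
    (hWm : ∀ z : ℂ, ‖z‖ ≤ 1 → DifferentiableAt ℂ Wm z)
    (hWmi : ∀ z : ℂ, ‖z‖ ≤ 1 → DifferentiableAt ℂ (fun z => Ring.inverse (Wm z)) z)
    (hp : ∀ z : ℂ, ‖z‖ ≤ 1 → IsUnit (Wp z)) (hm : ∀ z : ℂ, ‖z‖ ≤ 1 → IsUnit (Wm z))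
    (hR : ∀ z : ℂ, ‖z‖ = 1 → ∀ u, Wp z (Wm z⁻¹ u) =
      δ u + z • γp (res αp z (βp u)) + z⁻¹ • γm (res αm z⁻¹ (βm u))) :
    IsUnit ((1 : Xm →L[ℂ] Xm) - Q ∘L Z) := by
  have happ (x) : ((1 : Xm →L[ℂ] Xm) - Q ∘L Z) x = x - Q (Z x) := by simp
  rw [ContinuousLinearMap.isUnit_iff_bijective]
  constructor
  · refine (injective_iff_map_eq_zero _).2 fun x hx => ?_
    exact eq_zero_of_eq_QZ_of_factorization h hαp hαm hD hWpi hWm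
      (fun z hz u => DFunLike.congr_fun (Ring.inverse_mul_cancel _ (hp z hz)) u)
      (fun z hz u => DFunLike.congr_fun (Ring.inverse_mul_cancel _ (hm z hz)) u)
      hR (by rwa [happ] at hx)
  · intro y
    obtain ⟨s, hs⟩ := exists_sub_ZQ_eq_of_factorization h hαp hαm hA hWp hWpi hWmi
      (fun z hz u => DFunLike.congr_fun (Ring.mul_inverse_cancel _ (hp z hz)) u)
      (fun z hz u => DFunLike.congr_fun (Ring.mul_inverse_cancel _ (hm z hz)) u) hR y
    refine ⟨y + Q s, ?_⟩
    rw [happ, map_add, ← hs]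
    simp
end Factorization

section Construction
variable {U Xp Xm : Type*}
  [NormedAddCommGroup U] [NormedSpace ℂ U]
  [NormedAddCommGroup Xp] [NormedSpace ℂ Xp]
  [NormedAddCommGroup Xm] [NormedSpace ℂ Xm]
  {δ : U →L[ℂ] U} {γp : Xp →L[ℂ] U} {αp : Xp →L[ℂ] Xp} {βp : U →L[ℂ] Xp}
  {γm : Xm →L[ℂ] U} {αm : Xm →L[ℂ] Xm} {βm : U →L[ℂ] Xm} {A : Xp →L[ℂ] Xp} {D : Xm →L[ℂ] Xm}
  {Q : Xp →L[ℂ] Xm} {Z : Xm →L[ℂ] Xp} {N : U →L[ℂ] Xp} {M : Xm →L[ℂ] U}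
  {G : Xp →L[ℂ] Xp} {T : Xm →L[ℂ] Xm}

theorem isUnit_of_apply_eq {a b : U →L[ℂ] U} (h₁ : ∀ u, a (b u) = u) (h₂ : ∀ u, b (a u) = u) :
    IsUnit a :=
  ⟨⟨a, b, ContinuousLinearMap.ext h₁, ContinuousLinearMap.ext h₂⟩, rfl⟩

/-- The transfer function `1 + z c (1 - z a)⁻¹ b`. -/
def transfer (a : Xp →L[ℂ] Xp) (b : U →L[ℂ] Xp) (c : Xp →L[ℂ] U) (z : ℂ) : U →L[ℂ] U :=
  1 + z • (c ∘L res a z ∘L b)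

theorem transfer_apply (a : Xp →L[ℂ] Xp) (b : U →L[ℂ] Xp) (c : Xp →L[ℂ] U) (z : ℂ) (u : U) :
    transfer a b c z u = u + z • c (res a z (b u)) := by
  simp [transfer]

theorem differentiableAt_transfer [CompleteSpace Xp] {a : Xp →L[ℂ] Xp} {b : U →L[ℂ] Xp}
    {c : Xp →L[ℂ] U} {z : ℂ} (hz : IsUnit (1 - z • a)) :
    DifferentiableAt ℂ (transfer a b c) z := by
  have h := differentiableAt_res hz
  unfold transfer
  fun_prop

theorem isUnit_transfer_plus (h : Intertwining δ γp αp βp γm αm βm A D Q Z N M)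
    (hG₁ : ∀ s, G (s - Z (Q s)) = s) (hG₂ : ∀ s, G s - Z (Q (G s)) = s)
    {z : ℂ} (hαp : IsUnit (1 - z • αp)) (hA : IsUnit (1 - z • A)) :
    IsUnit (transfer αp (G ∘L N) γp z) := by
  refine isUnit_of_apply_eq (b := transfer A N (-(γp ∘L G)) z) (fun u => ?_) (fun u => ?_)
  · have ha := res_apply_sub hA (N u)
    have hw := transfer_apply A N (-(γp ∘L G)) z u
    simp only [_root_.neg_apply, ContinuousLinearMap.comp_apply] at hw
    set a := res A z (N u)
    have hN : N (transfer A N (-(γp ∘L G)) z u) =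
        G a - Z (Q (G a)) - z • (αp (G a) - Z (Q (αp (G a)))) := by
      have h1 := congrArg A (hG₂ a)
      rw [map_sub] at h1
      rw [hw, map_add, map_smul, map_neg, h.N_γp, ← ha, h1, hG₂]
      module
    rw [transfer_apply, ContinuousLinearMap.comp_apply, hN, map_sub, map_smul, hG₁, hG₁,
      res_sub_apply hαp, hw]
    module
  · have hp := res_apply_sub hαp (G (N u))
    have hw := transfer_apply αp (G ∘L N) γp z u
    simp only [ContinuousLinearMap.comp_apply] at hw
    set p := res αp z (G (N u))
    have hN : N (transfer αp (G ∘L N) γp z u) =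
        p - Z (Q p) - z • A (p - Z (Q p)) := by
      have h1 := hG₂ (N u)
      rw [hw, map_add, map_smul, h.N_γp]
      rw [← hp] at h1
      simp only [map_sub, map_smul] at h1 ⊢
      linear_combination (norm := module) -h1
    rw [transfer_apply, hN, res_sub_apply hA, hw]
    simp [hG₁]

theorem isUnit_transfer_minus (h : Intertwining δ γp αp βp γm αm βm A D Q Z N M)
    (hT₁ : ∀ x, T (x - Q (Z x)) = x) (hT₂ : ∀ x, T x - Q (Z (T x)) = x)
    {w : ℂ} (hαm : IsUnit (1 - w • αm)) (hD : IsUnit (1 - w • D)) :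
    IsUnit (transfer αm βm (M ∘L T) w) := by
  refine isUnit_of_apply_eq (b := transfer D (T ∘L βm) (-M) w) (fun u => ?_) (fun u => ?_)
  · have hy := res_apply_sub hD (T (βm u))
    have hv := transfer_apply D (T ∘L βm) (-M) w u
    simp only [_root_.neg_apply, ContinuousLinearMap.comp_apply] at hv
    set y := res D w (T (βm u))
    have hβ : βm (transfer D (T ∘L βm) (-M) w u) = y - Q (Z y) - w • αm (y - Q (Z y)) := by
      have h1 := hT₂ (βm u)
      rw [hv, map_add, map_smul, map_neg, h.βm_M]
      rw [← hy] at h1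
      simp only [map_sub, map_smul] at h1 ⊢
      linear_combination (norm := module) -h1
    rw [transfer_apply, hβ, res_sub_apply hαm, hv]
    simp [hT₁]
  · have hq := res_apply_sub hαm (βm u)
    have hv := transfer_apply αm βm (M ∘L T) w u
    simp only [ContinuousLinearMap.comp_apply] at hv
    set q := res αm w (βm u)
    have hβ : βm (transfer αm βm (M ∘L T) w u) =
        T q - Q (Z (T q)) - w • (D (T q) - Q (Z (D (T q)))) := by
      have h1 := congrArg αm (hT₂ q)
      rw [map_sub] at h1
      rw [hv, map_add, map_smul, h.βm_M, ← hq, h1, hT₂]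
      module
    rw [transfer_apply, ContinuousLinearMap.comp_apply, hβ, map_sub, map_smul, hT₁, hT₁,
      res_sub_apply hD, hv]
    simp

theorem transfer_mul_transfer_apply (h : Intertwining δ γp αp βp γm αm βm A D Q Z N M)
    (hG₁ : ∀ s, G (s - Z (Q s)) = s)
    (hT₁ : ∀ x, T (x - Q (Z x)) = x) (hT₂ : ∀ x, T x - Q (Z (T x)) = x)
    {z : ℂ} (hz : z ≠ 0) (hαp : IsUnit (1 - z • αp)) (hαm : IsUnit (1 - z⁻¹ • αm)) (u : U) :
    transfer αp (G ∘L N) γp z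
        ((δ + γp ∘L Z ∘L T ∘L βm) (transfer αm βm (M ∘L T) z⁻¹ u)) =
      δ u + z • γp (res αp z (βp u)) + z⁻¹ • γm (res αm z⁻¹ (βm u)) := by
  have hq := res_apply_sub hαm (βm u)
  have hv : (δ + γp ∘L Z ∘L T ∘L βm) (transfer αm βm (M ∘L T) z⁻¹ u) =
      δ u + z⁻¹ • γm (res αm z⁻¹ (βm u)) + γp (Z (T (res αm z⁻¹ (βm u)))) := by
    rw [transfer_apply]
    set q := res αm z⁻¹ (βm u)
    have h1 := congrArg αm (hT₂ q)
    have h2 := congrArg γm (hT₂ q)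
    rw [map_sub] at h1 h2
    simp only [_root_.add_apply, ContinuousLinearMap.comp_apply, map_add, map_smul,
      h.δ_M, h.βm_M, h1, map_sub T (αm q), hT₁]
    rw [← hq]
    simp only [map_sub, map_smul]
    linear_combination (norm := module) z⁻¹ • h2
  rw [hv, transfer_apply, ContinuousLinearMap.comp_apply]
  set q := res αm z⁻¹ (βm u)
  set t := Z (T q) with ht
  have htq : t - Z (Q t) = Z q := by rw [ht, ← map_sub, hT₂]
  have hN : N (δ u + z⁻¹ • γm q + γp t) =
      βp u - Z (Q (βp u)) + (αp t - Z (Q (αp t))) - z⁻¹ • (t - Z (Q t)) := by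
    have h1 := congrArg A htq
    simp only [map_add, map_smul, h.N_δ, h.N_γm, h.N_γp]
    rw [← hq, htq]
    simp only [map_sub, map_smul] at h1 ⊢
    linear_combination (norm := module) -h1
  have hres := res_sub_apply hαp t
  have e : z • res αp z (G (N (δ u + z⁻¹ • γm q + γp t))) = z • res αp z (βp u) - t := by
    rw [hN, map_sub, map_add, map_smul, hG₁, hG₁, hG₁]
    rw [map_sub, map_smul] at hres
    simp only [map_sub, map_add, map_smul, smul_sub, smul_add, smul_inv_smul₀ hz]
    linear_combination (norm := module) -hres
  rw [← map_smul γp z, e]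
  simp only [map_sub, map_smul]
  module
end Construction

theorem plusFactor_of_differentiableAt {E : Type*} [NormedAddCommGroup E] [InnerProductSpace ℂ E]
    [CompleteSpace E] {V : ℂ → E →L[ℂ] E} {S : Set ℂ} (hS : IsOpen S)
    (hb : closedBall (0 : ℂ) 1 ⊆ S) (hV : ∀ z ∈ S, DifferentiableAt ℂ V z)
    (hu : ∀ z ∈ S, IsUnit (V z)) : PlusFactor V := by
  refine ⟨S, hS, hb, DifferentiableOn.analyticOnNhd
    (fun z hz => (hV z hz).differentiableWithinAt) hS, hu, DifferentiableOn.analyticOnNhd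
    (fun z hz => ?_) hS⟩
  obtain ⟨u, hu⟩ := hu z hz
  have h1 : DifferentiableAt ℂ (Ring.inverse : (E →L[ℂ] E) → _) (V z) :=
    hu ▸ (analyticAt_inverse u).differentiableAt
  exact (h1.comp z (hV z hz)).differentiableWithinAt

theorem PlusFactor.differentiableAt {E : Type*} [NormedAddCommGroup E] [InnerProductSpace ℂ E]
    [CompleteSpace E] {V : ℂ → E →L[ℂ] E} (hV : PlusFactor V) {z : ℂ} (hz : ‖z‖ ≤ 1) :
    DifferentiableAt ℂ V z ∧ DifferentiableAt ℂ (fun z => Ring.inverse (V z)) z ∧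
      IsUnit (V z) := by
  obtain ⟨S, -, hb, h₁, h₂, h₃⟩ := hV
  have hzS := hb (by simpa using hz : z ∈ closedBall (0 : ℂ) 1)
  exact ⟨(h₁ z hzS).differentiableAt, (h₃ z hzS).differentiableAt, h₂ z hzS⟩

theorem Rfun_apply_of_norm_eq_one (δ : U →L[ℂ] U) (γp : Xp →L[ℂ] U) {αp : Xp →L[ℂ] Xp}
    (βp : U →L[ℂ] Xp) (γm : Xm →L[ℂ] U) {αm : Xm →L[ℂ] Xm} (βm : U →L[ℂ] Xm)
    (hαm : spectrum ℂ αm ⊆ ball (0 : ℂ) 1) {z : ℂ} (hz : ‖z‖ = 1) (u : U) :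
    Rfun δ γp αp βp γm αm βm z u =
      δ u + z • γp (res αp z (βp u)) + z⁻¹ • γm (res αm z⁻¹ (βm u)) := by
  rw [Rfun, inverse_smul_one_sub (ne_zero_of_norm_eq_one hz)
    (isUnit_one_sub_smul hαm (norm_inv_le_one hz))]
  simp [res]

theorem leftCanonicalWH_of_intertwining
    {δ : U →L[ℂ] U} {γp : Xp →L[ℂ] U} {αp : Xp →L[ℂ] Xp} {βp : U →L[ℂ] Xp}
    {γm : Xm →L[ℂ] U} {αm : Xm →L[ℂ] Xm} {βm : U →L[ℂ] Xm} {A : Xp →L[ℂ] Xp}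
    {D : Xm →L[ℂ] Xm} {Q : Xp →L[ℂ] Xm} {Z : Xm →L[ℂ] Xp} {N : U →L[ℂ] Xp} {M : Xm →L[ℂ] U}
    (h : Intertwining δ γp αp βp γm αm βm A D Q Z N M)
    (hαp : spectrum ℂ αp ⊆ ball (0 : ℂ) 1) (hαm : spectrum ℂ αm ⊆ ball (0 : ℂ) 1)
    (hA : spectrum ℂ A ⊆ ball (0 : ℂ) 1) (hD : spectrum ℂ D ⊆ ball (0 : ℂ) 1)
    (hR : IsUnit (Rfun δ γp αp βp γm αm βm 1))
    (hQZ : IsUnit ((1 : Xm →L[ℂ] Xm) - Q ∘L Z)) :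
    LeftCanonicalWH (Rfun δ γp αp βp γm αm βm) := by
  set T := Ring.inverse ((1 : Xm →L[ℂ] Xm) - Q ∘L Z)
  have hT₁ (x) : T (x - Q (Z x)) = x := by
    simpa using DFunLike.congr_fun (Ring.inverse_mul_cancel _ hQZ) x
  have hT₂ (x) : T x - Q (Z (T x)) = x := by
    simpa using DFunLike.congr_fun (Ring.mul_inverse_cancel _ hQZ) x
  set G : Xp →L[ℂ] Xp := 1 + Z ∘L T ∘L Q with hG
  have hG₁ (s) : G (s - Z (Q s)) = s := by
    have h1 := congrArg Z (hT₁ (Q s))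
    simp only [hG, _root_.add_apply, _root_.one_apply_eq_self, ContinuousLinearMap.comp_apply,
      map_sub] at h1 ⊢
    linear_combination (norm := module) h1
  have hG₂ (s) : G s - Z (Q (G s)) = s := by
    have h1 := congrArg Z (hT₂ (Q s))
    simp only [hG, _root_.add_apply, _root_.one_apply_eq_self,
      ContinuousLinearMap.comp_apply, map_add, map_sub] at h1 ⊢
    linear_combination (norm := module) h1
  set v := δ + γp ∘L Z ∘L T ∘L βm
  have hfac (z : ℂ) (hz : ‖z‖ = 1) : Rfun δ γp αp βp γm αm βm z =
      transfer αp (G ∘L N) γp z * (v * transfer αm βm (M ∘L T) z⁻¹) := by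
    ext u
    rw [Rfun_apply_of_norm_eq_one δ γp βp γm βm hαm hz]
    exact (transfer_mul_transfer_apply h hG₁ hT₁ hT₂ (ne_zero_of_norm_eq_one hz)
      (isUnit_one_sub_smul hαp hz.le) (isUnit_one_sub_smul hαm (norm_inv_le_one hz)) u).symm
  have hv : IsUnit v := by
    obtain ⟨a, ha⟩ := isUnit_transfer_plus h hG₁ hG₂
      (isUnit_one_sub_smul hαp norm_one.le) (isUnit_one_sub_smul hA norm_one.le)
    obtain ⟨b, hb⟩ := isUnit_transfer_minus h hT₁ hT₂ (w := 1⁻¹)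
      (isUnit_one_sub_smul hαm (by simp)) (isUnit_one_sub_smul hD (by simp))
    rwa [hfac 1 norm_one, ← ha, ← hb, Units.isUnit_units_mul, Units.isUnit_mul_units] at hR
  refine ⟨transfer αp (G ∘L N) γp, fun z => v * transfer αm βm (M ∘L T) z⁻¹, ?_,
    ⟨fun w => v * transfer αm βm (M ∘L T) w, ?_, fun _ _ => rfl⟩, hfac⟩
  · refine plusFactor_of_differentiableAt ((isOpen_setOf_isUnit_one_sub_smul αp).inter
      (isOpen_setOf_isUnit_one_sub_smul A)) (fun z hz => ?_)
      (fun z hz => differentiableAt_transfer hz.1)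
      (fun z hz => isUnit_transfer_plus h hG₁ hG₂ hz.1 hz.2)
    have hz : ‖z‖ ≤ 1 := by simpa using hz
    exact ⟨isUnit_one_sub_smul hαp hz, isUnit_one_sub_smul hA hz⟩
  · refine plusFactor_of_differentiableAt ((isOpen_setOf_isUnit_one_sub_smul αm).inter
      (isOpen_setOf_isUnit_one_sub_smul D)) (fun z hz => ?_)
      (fun z hz => (differentiableAt_transfer hz.1).const_mul v)
      (fun z hz => hv.mul (isUnit_transfer_minus h hT₁ hT₂ hz.1 hz.2))
    have hz : ‖z‖ ≤ 1 := by simpa using hz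
    exact ⟨isUnit_one_sub_smul hαm hz, isUnit_one_sub_smul hD hz⟩

/-- The Lyapunov equation, multiplied by `α₋°` from the right, is a Stein equation. -/
theorem stein_of_lyapunov
    {δ : U →L[ℂ] U} {βp : U →L[ℂ] Xp} {A : Xp →L[ℂ] Xp}
    {γm : Xm →L[ℂ] U} {αm : Xm →L[ℂ] Xm} {βm : U →L[ℂ] Xm} {Q : Xp →L[ℂ] Xm}
    (hαm : IsUnit αm) (hR0 : IsUnit (δ - (γm ∘L Ring.inverse αm) ∘L βm))
    (hδ : IsUnit (δ - (γm ∘L Q) ∘L βp)) {Z : Xm →L[ℂ] Xp}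
    (hZ : Z ∘L Ring.inverse (alphaMcirc δ βp γm αm βm Q) - A ∘L Z =
      -((βp ∘L Ring.inverse (δ - (γm ∘L Ring.inverse αm) ∘L βm)) ∘L
        (γm ∘L Ring.inverse αm))) (x : Xm) :
    Z x = A (Z (alphaMcirc δ βp γm αm βm Q x)) -
      βp (Ring.inverse (δ - (γm ∘L Q) ∘L βp) (γm x)) := by
  set d := Ring.inverse (δ - (γm ∘L Q) ∘L βp) with hd
  set a := Ring.inverse αm with ha
  set r := Ring.inverse (δ - (γm ∘L a) ∘L βm) with hr
  set D := alphaMcirc δ βp γm αm βm Q with hD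
  have ha₁ (x) : a (αm x) = x := DFunLike.congr_fun (Ring.inverse_mul_cancel _ hαm) x
  have ha₂ (x) : αm (a x) = x := DFunLike.congr_fun (Ring.mul_inverse_cancel _ hαm) x
  have hr₁ (u) : r (δ u - γm (a (βm u))) = u := by
    simpa using DFunLike.congr_fun (Ring.inverse_mul_cancel _ hR0) u
  have hr₂ (u) : δ (r u) - γm (a (βm (r u))) = u := by
    simpa using DFunLike.congr_fun (Ring.mul_inverse_cancel _ hR0) u
  have hd₁ (u) : d (δ u - γm (Q (βp u))) = u := by
    simpa using DFunLike.congr_fun (Ring.inverse_mul_cancel _ hδ) u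
  have hd₂ (u) : δ (d u) - γm (Q (βp (d u))) = u := by
    simpa using DFunLike.congr_fun (Ring.mul_inverse_cancel _ hδ) u
  have hDx (x) : D x = αm x - (βm (d (γm x)) - αm (Q (βp (d (γm x))))) := by
    simp [hD, alphaMcirc, hd]
  have hγD (x) : γm (a (D x)) = δ (d (γm x)) - γm (a (βm (d (γm x)))) := by
    have h1 := hd₂ (γm x)
    rw [hDx]
    simp only [map_sub, ha₁]
    linear_combination (norm := module) -h1
  have hrD (x) : r (γm (a (D x))) = d (γm x) := by rw [hγD, hr₁]
  have hDunit : IsUnit D := by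
    refine isUnit_of_apply_eq
      (b := a + a ∘L (βm - αm ∘L Q ∘L βp) ∘L r ∘L γm ∘L a) (fun x => ?_) (fun x => ?_)
    · set y := (a + a ∘L (βm - αm ∘L Q ∘L βp) ∘L r ∘L γm ∘L a) x with hy
      have hy' : y = a x + (a (βm (r (γm (a x)))) - Q (βp (r (γm (a x))))) := by
        simp [hy, ha₁]
      have h1 : d (γm y) = r (γm (a x)) := by
        rw [← hd₁ (r (γm (a x))), hy']
        congr 1
        have h2 := hr₂ (γm (a x))
        simp only [map_sub, map_add]
        linear_combination (norm := module) -h2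
      rw [hDx, h1, hy']
      simp only [map_sub, map_add, ha₂]
      abel
    · simp only [_root_.add_apply, _root_.sub_apply,
        ContinuousLinearMap.comp_apply, hrD]
      rw [hDx]
      simp only [map_sub, ha₁]
      abel
  have h1 := DFunLike.congr_fun hZ (D x)
  have h2 : Ring.inverse D (D x) = x := DFunLike.congr_fun (Ring.inverse_mul_cancel _ hDunit) x
  simp only [_root_.neg_apply, _root_.sub_apply,
    ContinuousLinearMap.comp_apply, h2, hrD] at h1
  rw [sub_eq_add_neg, ← h1]
  abel

/-- Suppose `α₋` and `R(0) = δ − γ₋α₋⁻¹β₋` are invertible, `R(z)` is invertible on an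
open annulus containing the unit circle, and `R` admits a right canonical Wiener–Hopf
factorization, with stabilizing solution `Q` of (R1).  If `Z` solves the Lyapunov
equation `Z(α₋°)⁻¹ − α₊°Z = −β₊R(0)⁻¹γ₋α₋⁻¹`, then `R` admits a left canonical
Wiener–Hopf factorization if and only if `I − QZ` is invertible. -/
theorem leftCanonicalWH_iff_isUnit_one_sub_QZ
    (δ : U →L[ℂ] U) (γp : Xp →L[ℂ] U) (αp : Xp →L[ℂ] Xp) (βp : U →L[ℂ] Xp)
    (γm : Xm →L[ℂ] U) (αm : Xm →L[ℂ] Xm) (βm : U →L[ℂ] Xm)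
    (hαp : spectrum ℂ αp ⊆ ball (0 : ℂ) 1) (hαm : spectrum ℂ αm ⊆ ball (0 : ℂ) 1)
    (hαmUnit : IsUnit αm)
    (hR0 : IsUnit (δ - (γm ∘L Ring.inverse αm) ∘L βm))
    (r₁ r₂ : ℝ) (hr₁ : r₁ < 1) (hr₂ : 1 < r₂)
    (hRinv : ∀ z : ℂ, r₁ < ‖z‖ → ‖z‖ < r₂ → IsUnit (Rfun δ γp αp βp γm αm βm z))
    (hWH : RightCanonicalWH (Rfun δ γp αp βp γm αm βm))
    (Q : Xp →L[ℂ] Xm)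
    (hQ : SolvesR1 δ γp αp βp γm αm βm Q) (hQs : StabilizingR1 δ γp αp βp γm αm βm Q)
    (Z : Xm →L[ℂ] Xp)
    (hZ : Z ∘L Ring.inverse (alphaMcirc δ βp γm αm βm Q) -
        alphaPcirc δ γp αp βp γm Q ∘L Z =
      -((βp ∘L Ring.inverse (δ - (γm ∘L Ring.inverse αm) ∘L βm)) ∘L
        (γm ∘L Ring.inverse αm))) :
    LeftCanonicalWH (Rfun δ γp αp βp γm αm βm) ↔
      IsUnit ((1 : Xm →L[ℂ] Xm) - Q ∘L Z) := by
  have hstein := stein_of_lyapunov hαmUnit hR0 hQ.1 hZ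
  obtain ⟨hδ, hric⟩ := hQ
  obtain ⟨hA, hD⟩ := hQs
  have h := intertwining_of_riccati_of_stein (δ := δ) (γp := γp) (αp := αp) (βm := βm)
    (d := Ring.inverse (δ - (γm ∘L Q) ∘L βp))
    (fun u => by
      have h1 := DFunLike.congr_fun (Ring.inverse_mul_cancel _ hδ) u
      simp only [_root_.mul_apply_eq_comp, _root_.sub_apply,
        ContinuousLinearMap.comp_apply, map_sub, _root_.one_apply_eq_self] at h1
      exact sub_eq_iff_eq_add.1 h1)
    (fun u => by
      have h1 := DFunLike.congr_fun (Ring.mul_inverse_cancel _ hδ) u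
      simp only [_root_.mul_apply_eq_comp, _root_.sub_apply,
        ContinuousLinearMap.comp_apply, _root_.one_apply_eq_self] at h1
      exact sub_eq_iff_eq_add.1 h1)
    (fun _ => rfl) (fun _ => rfl) (fun x => DFunLike.congr_fun hric x) hstein
  constructor
  · rintro ⟨Wp, Wm, hWp, ⟨Vm, hVm, hWm⟩, hR⟩
    refine isUnit_of_factorization h hαp hαm hA hD
      (fun z hz => (hWp.differentiableAt hz).1) (fun z hz => (hWp.differentiableAt hz).2.1)
      (fun z hz => (hVm.differentiableAt hz).1) (fun z hz => (hVm.differentiableAt hz).2.1)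
      (fun z hz => (hWp.differentiableAt hz).2.2) (fun z hz => (hVm.differentiableAt hz).2.2)
      fun z hz u => ?_
    rw [← Rfun_apply_of_norm_eq_one δ γp βp γm βm hαm hz, hR z hz, hWm z hz.ge]
    rfl
  · exact leftCanonicalWH_of_intertwining h hαp hαm hA hD (hRinv 1 (by simpa) (by simpa))
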